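/- For all integers m,n ≥ 2, the grid graph G_{m,n} is uniformizable: there exist edge weights σ : E(G_{m,n}) → ℝ_{>0} such that the weighted uniform spanning tree pmf μ_σ, defined on the set Γ of spanning trees of G_{m,n} by μ_σ(γ) = (∏_{e∈γ} σ(e)) / (∑_{γ'∈Γ} ∏_{e∈γ'} σ(e)), is a fair pmf, i.e., μ_σ minimizes the variance of the edge probabilities over all pmfs on Γ. -/

import Mathlib

open scoped Classical

noncomputable section

variable {V : Type*} [Fintype V] [DecidableEq V]

/-- `T` is (the edge set of) a spanning tree of the vertex-induced subgraph of `G`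
on the vertex set `S`: its edges are edges of `G` with both endpoints in `S`,
it is acyclic, and every two vertices of `S` are joined by a path using edges of `T`. -/
def IsSpanningTreeOn (G : SimpleGraph V) (S : Finset V) (T : Finset (Sym2 V)) : Prop :=
  (↑T : Set (Sym2 V)) ⊆ G.edgeSet ∧ (∀ e ∈ T, ∀ v ∈ e, v ∈ S) ∧
    (SimpleGraph.fromEdgeSet (↑T : Set (Sym2 V))).IsAcyclic ∧
    ∀ u ∈ S, ∀ w ∈ S, (SimpleGraph.fromEdgeSet (↑T : Set (Sym2 V))).Reachable u w

/-- A probability mass function on the spanning trees of the induced subgraph of `G` on `S`. -/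
structure TreePMFOn (G : SimpleGraph V) (S : Finset V) where
  toFun : Finset (Sym2 V) → ℝ
  nonneg : ∀ T, 0 ≤ toFun T
  supp : ∀ T, toFun T ≠ 0 → IsSpanningTreeOn G S T
  sum_one : ∑ T : Finset (Sym2 V), toFun T = 1

/-- Edge probability `η_μ(e)`. -/
def edgeProbOn {G : SimpleGraph V} {S : Finset V} (μ : TreePMFOn G S) (e : Sym2 V) : ℝ :=
  ∑ T : Finset (Sym2 V), if e ∈ T then μ.toFun T else 0

/-- Edges of `G` with both endpoints in `S`. -/
def inducedEdges (G : SimpleGraph V) (S : Finset V) : Finset (Sym2 V) :=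
  G.edgeFinset.filter fun e => ∀ v ∈ e, v ∈ S

/-- Variance of the edge probabilities of `μ` over the edges within `S`. -/
def edgeVarOn {G : SimpleGraph V} {S : Finset V} (μ : TreePMFOn G S) : ℝ :=
  (∑ e ∈ inducedEdges G S, (edgeProbOn μ e) ^ 2) / ((inducedEdges G S).card : ℝ) -
    ((∑ e ∈ inducedEdges G S, edgeProbOn μ e) / ((inducedEdges G S).card : ℝ)) ^ 2

/-- A pmf is fair if it minimizes the variance of the edge probabilities. -/
def IsFairOn {G : SimpleGraph V} {S : Finset V} (μ : TreePMFOn G S) : Prop :=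
  ∀ ν : TreePMFOn G S, edgeVarOn μ ≤ edgeVarOn ν

/-- A fair tree: a spanning tree in the support of some fair pmf. -/
def IsFairTreeOn (G : SimpleGraph V) (S : Finset V) (T : Finset (Sym2 V)) : Prop :=
  ∃ μ : TreePMFOn G S, IsFairOn μ ∧ μ.toFun T ≠ 0

/-- The 1-density `θ(H) = |E(H)|/(|V(H)|-1)` of the induced subgraph on `S`. -/
def density (G : SimpleGraph V) (S : Finset V) : ℝ :=
  ((inducedEdges G S).card : ℝ) / ((S.card : ℝ) - 1)

/-- `S` induces a member of `H(G)`: connected, vertex-induced, with at least one edge. -/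
def InH (G : SimpleGraph V) (S : Finset V) : Prop :=
  (inducedEdges G S).Nonempty ∧ (G.induce (↑S : Set V)).Connected

/-- `S` induces a 1-densest subgraph of `G`. -/
def IsDensest (G : SimpleGraph V) (S : Finset V) : Prop :=
  InH G S ∧ ∀ S' : Finset V, InH G S' → density G S' ≤ density G S

/-- `S` induces a minimal 1-densest subgraph of `G`. -/
def IsMinimalDensest (G : SimpleGraph V) (S : Finset V) : Prop :=
  IsDensest G S ∧ ∀ S' : Finset V, S' ⊆ S → S' ≠ S → ¬ IsDensest G S'

/-- The induced subgraph on `S` is homogeneous: some pmf on its spanning trees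
has constant edge probabilities. -/
def IsHomogeneousOn (G : SimpleGraph V) (S : Finset V) : Prop :=
  ∃ μ : TreePMFOn G S, ∃ c : ℝ, ∀ e ∈ inducedEdges G S, edgeProbOn μ e = c

/-- The induced subgraph on `S` has the strict 1-density property. -/
def StrictDensityOn (G : SimpleGraph V) (S : Finset V) : Prop :=
  ∀ S' : Finset V, S' ⊆ S → InH G S' → S' ≠ S → density G S' < density G S

/-- The `m`-by-`n` grid graph: the box product of two path graphs. -/
def gridGraph (m n : ℕ) : SimpleGraph (Fin m × Fin n) :=
  SimpleGraph.fromRel fun v w =>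
    (v.1 = w.1 ∧ v.2.val + 1 = w.2.val) ∨ (v.2 = w.2 ∧ v.1.val + 1 = w.1.val)

/-!
If all edges have the same probability under a pmf, their variance is `0` and the pmf is fair.
A weighted uniform pmf with this property exists as soon as some constant vector `c` lies in the
relative interior of the spanning tree polytope. Indeed, the convex function
`x ↦ ∑_T exp (∑_{e ∈ T} x e - c ∑_e x e)` then attains its minimum, and its critical point equation
says that the weights `σ = exp x` give every edge the probability `c`.

The grid is the box product of two paths, and what matters is that the factors are trees. For a
uniformly random root `r`, let every vertex pick as its parent a neighbour closer to `r`: one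
candidate lies in its row and one in its column, and if both exist a coin of bias `q` decides. For
the right `q` this random spanning tree contains every edge with the same probability `c`. Now let
every spanning tree have `x`-weight at most `c ∑_e x e`, the expected weight of the random tree. The
trees in which each vertex picks the parent edge of larger `x`-weight are, averaged over `r`, at
least as heavy as the random one, so equality holds throughout and the two candidate edges always
have the same `x`-weight. If both coordinates of `r` are adjacent to those of `v`, the candidates
form a corner at `v`, so row and column edges at each vertex agree and `x` is constant.
-/

section PositiveDual

variable {ι E : Type*} [Fintype ι] [NormedAddCommGroup E] [NormedSpace ℝ E]
  [FiniteDimensional ℝ E]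

lemma exists_pos_forall_mul_norm_le {p : E → ℝ} (hp : Continuous p)
    (hsmul : ∀ (t : ℝ) (x : E), 0 ≤ t → p (t • x) = t * p x) (hpos : ∀ x, x ≠ 0 → 0 < p x) :
    ∃ δ > 0, ∀ x, δ * ‖x‖ ≤ p x := by
  have : ProperSpace E := FiniteDimensional.proper_real E
  obtain ⟨δ, hδ, hle⟩ := (isCompact_sphere (0 : E) 1).exists_forall_le' hp.continuousOn
    (a := 0) fun x hx => hpos x (ne_zero_of_mem_unit_sphere ⟨x, hx⟩)
  refine ⟨δ, hδ, fun x => ?_⟩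
  rcases eq_or_ne x 0 with rfl | hx
  · simpa using (hsmul 0 0 le_rfl).ge
  · have hunit : ‖x‖⁻¹ • x ∈ Metric.sphere (0 : E) 1 := by
      simp [norm_smul, hx]
    calc δ * ‖x‖ ≤ p (‖x‖⁻¹ • x) * ‖x‖ := by gcongr; exact hle _ hunit
      _ = p x := by rw [hsmul _ _ (by positivity)]; field_simp

lemma exists_isMinOn_sum_exp (W : Submodule ℝ (ι → ℝ))
    (hW : ∀ y ∈ W, (∀ i, y i ≤ 0) → y = 0) :
    ∃ y ∈ W, ∀ z ∈ W, ∑ i, Real.exp (y i) ≤ ∑ i, Real.exp (z i) := by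
  have hcoord (i : ι) : Continuous fun y : W => y.1 i :=
    (continuous_apply i).comp continuous_subtype_val
  obtain ⟨δ, hδ, hnorm⟩ := exists_pos_forall_mul_norm_le (E := W)
    (p := fun y => ∑ i, max (y.1 i) 0)
    (continuous_finsetSum _ fun i _ => (hcoord i).max continuous_const)
    (fun t y ht => by simp [Finset.mul_sum, mul_max_of_nonneg _ _ ht])
    (fun y hy => by
      by_contra! h
      have hzero := (Finset.sum_eq_zero_iff_of_nonneg fun i _ => le_max_right (y.1 i) 0).1
        (h.antisymm (Finset.sum_nonneg fun i _ => le_max_right _ _))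
      exact hy (Subtype.ext (hW y y.2 fun i => max_eq_right_iff.1 (hzero i (Finset.mem_univ i)))))
  have hcoercive (y : W) : δ * ‖y‖ ≤ ∑ i, Real.exp (y.1 i) :=
    (hnorm y).trans <| Finset.sum_le_sum fun i _ =>
      max_le (by linarith [Real.add_one_le_exp (y.1 i)]) (Real.exp_pos _).le
  have : ProperSpace W := FiniteDimensional.proper_real W
  obtain ⟨y, hy⟩ := Continuous.exists_forall_le
    (f := fun y : W => ∑ i, Real.exp (y.1 i)) (continuous_finsetSum _ fun i _ => (hcoord i).rexp)
    (Filter.tendsto_atTop_mono hcoercive (tendsto_norm_cocompact_atTop.const_mul_atTop hδ))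
  exact ⟨y, y.2, fun z hz => hy ⟨z, hz⟩⟩

lemma exists_forall_sum_exp_mul_eq_zero (W : Submodule ℝ (ι → ℝ))
    (hW : ∀ y ∈ W, (∀ i, y i ≤ 0) → y = 0) :
    ∃ y ∈ W, ∀ z ∈ W, ∑ i, Real.exp (y i) * z i = 0 := by
  obtain ⟨y, hy, hmin⟩ := exists_isMinOn_sum_exp W hW
  refine ⟨y, hy, fun z hz => ?_⟩
  have hderiv : HasDerivAt (fun t : ℝ => ∑ i, Real.exp (y i + t * z i))
      (∑ i, Real.exp (y i) * z i) 0 := by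
    refine HasDerivAt.fun_sum fun i _ => ?_
    simpa using (((hasDerivAt_id (0 : ℝ)).mul_const (z i)).const_add (y i)).exp
  refine IsLocalMin.hasDerivAt_eq_zero (Filter.Eventually.of_forall fun t => ?_) hderiv
  simpa using hmin (y + t • z) (W.add_mem hy (W.smul_mem t hz))

end PositiveDual

section Fairness

variable {U : Type*} [Fintype U] [DecidableEq U] {G : SimpleGraph U} {S : Finset U}

lemma edgeVarOn_nonneg (μ : TreePMFOn G S) : 0 ≤ edgeVarOn μ :=
  sub_nonneg.2 sum_div_card_sq_le_sum_sq_div_card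

lemma edgeVarOn_eq_zero_of_const {μ : TreePMFOn G S} {c : ℝ}
    (h : ∀ e ∈ inducedEdges G S, edgeProbOn μ e = c) : edgeVarOn μ = 0 := by
  rw [edgeVarOn, Finset.sum_congr rfl h, Finset.sum_congr rfl fun e he => by rw [h e he]]
  rcases (inducedEdges G S).eq_empty_or_nonempty with hE | hE
  · simp [hE]
  · have : ((inducedEdges G S).card : ℝ) ≠ 0 := by exact_mod_cast hE.card_ne_zero
    simp [this]

lemma isFairOn_of_const {μ : TreePMFOn G S} {c : ℝ}
    (h : ∀ e ∈ inducedEdges G S, edgeProbOn μ e = c) : IsFairOn μ :=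
  fun ν => (edgeVarOn_eq_zero_of_const h).trans_le (edgeVarOn_nonneg ν)

end Fairness

section Uniformization

variable {U : Type*} [Fintype U] {G : SimpleGraph U} {σ : Sym2 U → ℝ}

/-- The set `Γ_G` of spanning trees of `G`, as edge sets. -/
def spanningTrees (G : SimpleGraph U) : Finset (Finset (Sym2 U)) :=
  Finset.univ.filter fun T => IsSpanningTreeOn G Finset.univ T

lemma mem_spanningTrees {T : Finset (Sym2 U)} :
    T ∈ spanningTrees G ↔ IsSpanningTreeOn G Finset.univ T := by
  simp [spanningTrees]

/-- `G` is uniformizable: for some positive edge weights `σ`, the weighted uniform spanning tree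
pmf `μ_σ` is fair. -/
def IsUniformizable [DecidableEq U] (G : SimpleGraph U) : Prop :=
  ∃ σ : Sym2 U → ℝ, (∀ e ∈ G.edgeFinset, 0 < σ e) ∧
    ∃ μ : TreePMFOn G Finset.univ,
      (∀ T, μ.toFun T = (if IsSpanningTreeOn G Finset.univ T then ∏ e ∈ T, σ e else 0) /
        ∑ T' ∈ spanningTrees G, ∏ e ∈ T', σ e) ∧
      IsFairOn μ

lemma prod_pos_of_mem_spanningTrees (hσ : ∀ e ∈ G.edgeSet, 0 < σ e) {T : Finset (Sym2 U)}
    (hT : T ∈ spanningTrees G) : 0 < ∏ e ∈ T, σ e :=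
  Finset.prod_pos fun e he => hσ e ((mem_spanningTrees.1 hT).1 he)

/-- The weighted uniform spanning tree pmf `μ_σ`. -/
def weightedTreePMF (hσ : ∀ e ∈ G.edgeSet, 0 < σ e) (hG : (spanningTrees G).Nonempty) :
    TreePMFOn G Finset.univ where
  toFun T := (if IsSpanningTreeOn G Finset.univ T then ∏ e ∈ T, σ e else 0) /
    ∑ T' ∈ spanningTrees G, ∏ e ∈ T', σ e
  nonneg T := by
    refine div_nonneg ?_ (Finset.sum_nonneg fun T' hT' => (prod_pos_of_mem_spanningTrees hσ hT').le)
    split_ifs with hT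
    · exact (prod_pos_of_mem_spanningTrees hσ (mem_spanningTrees.2 hT)).le
    · exact le_rfl
  supp T hT := by
    by_contra hT'
    simp [hT'] at hT
  sum_one := by
    rw [← Finset.sum_div, ← Finset.sum_filter]
    exact div_self (Finset.sum_pos (fun T hT => prod_pos_of_mem_spanningTrees hσ hT) hG).ne'

lemma edgeProbOn_weightedTreePMF [DecidableEq U] (hσ : ∀ e ∈ G.edgeSet, 0 < σ e)
    (hG : (spanningTrees G).Nonempty) (e : Sym2 U) :
    edgeProbOn (weightedTreePMF hσ hG) e =
      (∑ T ∈ spanningTrees G, (∏ e' ∈ T, σ e') * if e ∈ T then 1 else 0) /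
        ∑ T ∈ spanningTrees G, ∏ e' ∈ T, σ e' := by
  simp only [edgeProbOn, weightedTreePMF, spanningTrees, Finset.sum_div, Finset.sum_filter]
  refine Finset.sum_congr rfl fun T _ => ?_
  split_ifs <;> simp

/-- The amount by which the `x`-weight of each spanning tree exceeds `c` times the total
`x`-weight, as a linear map in the edge weights `x`. -/
def treeExcess (G : SimpleGraph U) (c : ℝ) : (Sym2 U → ℝ) →ₗ[ℝ] (spanningTrees G → ℝ) :=
  LinearMap.pi fun T =>
    ∑ e ∈ T.1, LinearMap.proj e - c • ∑ e ∈ G.edgeFinset, LinearMap.proj e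

lemma treeExcess_apply (c : ℝ) (x : Sym2 U → ℝ) (T : spanningTrees G) :
    treeExcess G c x T = ∑ e ∈ T.1, x e - c * ∑ e ∈ G.edgeFinset, x e := by
  simp [treeExcess]

/-- The constant vector `c` lies in the relative interior of the spanning tree polytope of `G`,
in dual form: no linear functional `x` separates it from the spanning trees, except by being
constant on them. -/
def IsInteriorConstant (G : SimpleGraph U) (c : ℝ) : Prop :=
  ∀ x : Sym2 U → ℝ,
    (∀ T ∈ spanningTrees G, ∑ e ∈ T, x e ≤ c * ∑ e ∈ G.edgeFinset, x e) →
      ∀ T ∈ spanningTrees G, ∑ e ∈ T, x e = c * ∑ e ∈ G.edgeFinset, x e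

lemma IsInteriorConstant.exists_sum_exp_treeExcess_mul_eq_zero {c : ℝ}
    (hc : IsInteriorConstant G c) : ∃ x : Sym2 U → ℝ, ∀ z : Sym2 U → ℝ,
      ∑ T : spanningTrees G, Real.exp (treeExcess G c x T) * treeExcess G c z T = 0 := by
  obtain ⟨_, ⟨x, rfl⟩, hx⟩ := exists_forall_sum_exp_mul_eq_zero
    (LinearMap.range (treeExcess G c)) <| by
      rintro _ ⟨x, rfl⟩ hle
      ext T
      simp only [treeExcess_apply, sub_nonpos] at hle
      rw [treeExcess_apply, sub_eq_zero.2 (hc x (fun T hT => hle ⟨T, hT⟩) T T.2), Pi.zero_apply]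
  exact ⟨x, fun z => hx _ ⟨z, rfl⟩⟩

lemma IsInteriorConstant.exists_weight [DecidableEq U] {c : ℝ} (hc : IsInteriorConstant G c) :
    ∃ σ : Sym2 U → ℝ, (∀ e, 0 < σ e) ∧ ∀ e ∈ G.edgeSet,
      ∑ T ∈ spanningTrees G, (∏ e' ∈ T, σ e') * (if e ∈ T then 1 else 0) =
        c * ∑ T ∈ spanningTrees G, ∏ e' ∈ T, σ e' := by
  obtain ⟨x, hx⟩ := hc.exists_sum_exp_treeExcess_mul_eq_zero
  refine ⟨fun e => Real.exp (x e), fun e => Real.exp_pos _, fun e he => ?_⟩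
  have hexp (T : spanningTrees G) : Real.exp (treeExcess G c x T) =
      Real.exp (-(c * ∑ e ∈ G.edgeFinset, x e)) * ∏ e ∈ T.1, Real.exp (x e) := by
    rw [treeExcess_apply, ← Real.exp_sum, ← Real.exp_add, sub_eq_neg_add]
  have hsingle (T : spanningTrees G) :
      treeExcess G c (Pi.single e 1) T = (if e ∈ T.1 then 1 else 0) - c := by
    simp [treeExcess_apply, he]
  have hcritical := hx (Pi.single e 1)
  simp only [hexp, hsingle, mul_assoc, ← Finset.mul_sum] at hcritical
  have hsum := (mul_eq_zero.1 hcritical).resolve_left (Real.exp_pos _).ne'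
  rw [Finset.sum_coe_sort (spanningTrees G) fun T =>
    (∏ e' ∈ T, Real.exp (x e')) * ((if e ∈ T then 1 else 0) - c)] at hsum
  simp only [mul_sub, Finset.sum_sub_distrib, ← Finset.sum_mul] at hsum
  linarith

theorem IsInteriorConstant.isUniformizable [DecidableEq U] {c : ℝ} (hc : IsInteriorConstant G c)
    (hG : (spanningTrees G).Nonempty) : IsUniformizable G := by
  obtain ⟨σ, hpos, hσ⟩ := hc.exists_weight
  refine ⟨σ, fun e _ => hpos e, weightedTreePMF (fun e _ => hpos e) hG, fun T => rfl,
    isFairOn_of_const (c := c) fun e he => ?_⟩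
  have hZ := Finset.sum_pos
    (fun T hT => prod_pos_of_mem_spanningTrees (fun e _ => hpos e) hT) hG
  rw [edgeProbOn_weightedTreePMF, div_eq_iff hZ.ne']
  exact hσ e (SimpleGraph.mem_edgeFinset.1 (Finset.mem_filter.1 he).1)

end Uniformization

section ParentMaps

variable {U : Type*} {G : SimpleGraph U} {r : U} {p : U → U}

/-- `p` is a parent function for `G` rooted at `r`: it sends every other vertex to a neighbour
strictly closer to `r`. The value `p r` is unconstrained. -/
structure IsParentMap (G : SimpleGraph U) (r : U) (p : U → U) : Prop where
  adj : ∀ v, v ≠ r → G.Adj v (p v)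
  dist_lt : ∀ v, v ≠ r → G.dist (p v) r < G.dist v r

/-- A neighbour of `v` strictly closer to `r`, or `v` itself if there is none. -/
def stepToward (G : SimpleGraph U) (r v : U) : U :=
  if h : ∃ w, G.Adj v w ∧ G.dist w r < G.dist v r then h.choose else v

lemma isParentMap_stepToward (hG : G.Connected) (r : U) : IsParentMap G r (stepToward G r) := by
  have hstep (v : U) (hv : v ≠ r) : ∃ w, G.Adj v w ∧ G.dist w r < G.dist v r := by
    obtain ⟨W, hW⟩ := hG.exists_walk_length_eq_dist v r
    cases W with
    | nil => exact absurd rfl hv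
    | cons h W' =>
      refine ⟨_, h, ?_⟩
      rw [← hW, SimpleGraph.Walk.length_cons]
      exact Nat.lt_succ_of_le (SimpleGraph.dist_le W')
  constructor <;> intro v hv <;> rw [stepToward, dif_pos (hstep v hv)]
  · exact (hstep v hv).choose_spec.1
  · exact (hstep v hv).choose_spec.2

lemma IsParentMap.eq_root_of_adj (hp : IsParentMap G r p) {v : U} (hv : G.Adj v r) : p v = r := by
  have hdist : G.dist (p v) r = 0 := by
    have := hp.dist_lt v hv.ne
    rwa [SimpleGraph.dist_eq_one_iff_adj.2 hv, Nat.lt_one_iff] at this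
  exact ((hp.adj v hv.ne).symm.reachable.trans hv.reachable).dist_eq_zero_iff.1 hdist

lemma edgeSet_fromEdgeSet_of_subset_edgeSet {s : Set (Sym2 U)} (hs : s ⊆ G.edgeSet) :
    (SimpleGraph.fromEdgeSet s).edgeSet = s := by
  rw [SimpleGraph.edgeSet_fromEdgeSet, sdiff_eq_left]
  exact Set.disjoint_left.2 fun e he => G.not_isDiag_of_mem_edgeSet (hs he)

variable [Fintype U]

/-- The edges joining each vertex other than the root `r` to its parent. -/
def parentEdges (r : U) (p : U → U) : Finset (Sym2 U) :=
  (Finset.univ.erase r).image fun v => s(v, p v)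

lemma IsParentMap.injOn (hp : IsParentMap G r p) :
    Set.InjOn (fun v => s(v, p v)) (Finset.univ.erase r : Finset U) := by
  intro v hv w hw h
  have hlt_v := hp.dist_lt v (Finset.ne_of_mem_erase hv)
  have hlt_w := hp.dist_lt w (Finset.ne_of_mem_erase hw)
  rcases Sym2.eq_iff.1 h with ⟨h, -⟩ | ⟨hvw, hwv⟩
  · exact h
  · rw [hwv] at hlt_v
    rw [← hvw] at hlt_w
    exact absurd hlt_v hlt_w.asymm

lemma IsParentMap.card_parentEdges (hp : IsParentMap G r p) :
    (parentEdges r p).card + 1 = Fintype.card U := by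
  rw [parentEdges, Finset.card_image_of_injOn hp.injOn,
    Finset.card_erase_add_one (Finset.mem_univ r), Finset.card_univ]

lemma IsParentMap.coe_parentEdges_subset (hp : IsParentMap G r p) :
    (parentEdges r p : Set (Sym2 U)) ⊆ G.edgeSet := by
  intro e he
  obtain ⟨v, hv, rfl⟩ := Finset.mem_image.1 he
  exact hp.adj v (Finset.ne_of_mem_erase hv)

lemma IsParentMap.connected_fromEdgeSet_parentEdges (hp : IsParentMap G r p) :
    (SimpleGraph.fromEdgeSet (parentEdges r p : Set (Sym2 U))).Connected := by
  have hreach (v : U) :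
      (SimpleGraph.fromEdgeSet (parentEdges r p : Set (Sym2 U))).Reachable v r := by
    induction h : G.dist v r using Nat.strong_induction_on generalizing v with
    | _ d ih =>
      rcases eq_or_ne v r with rfl | hv
      · rfl
      · have hstep : s(v, p v) ∈ parentEdges r p :=
          Finset.mem_image_of_mem _ (Finset.mem_erase.2 ⟨hv, Finset.mem_univ v⟩)
        exact ((SimpleGraph.fromEdgeSet_adj _).2 ⟨hstep, (hp.adj v hv).ne⟩).reachable.trans
          (ih _ (h ▸ hp.dist_lt v hv) (p v) rfl)
  have : Nonempty U := ⟨r⟩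
  exact ⟨fun u w => (hreach u).trans (hreach w).symm⟩

lemma isSpanningTreeOn_univ_iff [Nonempty U] {T : Finset (Sym2 U)} :
    IsSpanningTreeOn G Finset.univ T ↔
      (T : Set (Sym2 U)) ⊆ G.edgeSet ∧
        (SimpleGraph.fromEdgeSet (T : Set (Sym2 U))).Connected ∧
          T.card + 1 = Fintype.card U := by
  constructor
  · rintro ⟨hT, -, hacyclic, hreach⟩
    have hconn : (SimpleGraph.fromEdgeSet (T : Set (Sym2 U))).Connected :=
      ⟨fun u w => hreach u (Finset.mem_univ u) w (Finset.mem_univ w)⟩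
    have hcard := (SimpleGraph.isTree_iff_connected_and_card.1 ⟨hconn, hacyclic⟩).2
    rw [edgeSet_fromEdgeSet_of_subset_edgeSet hT] at hcard
    exact ⟨hT, hconn, by simpa using hcard⟩
  · rintro ⟨hT, hconn, hcard⟩
    refine ⟨hT, fun _ _ _ _ => Finset.mem_univ _, ?_, fun u _ w _ => hconn.preconnected u w⟩
    refine (SimpleGraph.isTree_iff_connected_and_card.2 ⟨hconn, ?_⟩).isAcyclic
    rw [edgeSet_fromEdgeSet_of_subset_edgeSet hT]
    simpa using hcard

lemma IsParentMap.parentEdges_mem_spanningTrees (hp : IsParentMap G r p) :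
    parentEdges r p ∈ spanningTrees G := by
  have : Nonempty U := ⟨r⟩
  exact mem_spanningTrees.2 <| isSpanningTreeOn_univ_iff.2
    ⟨hp.coe_parentEdges_subset, hp.connected_fromEdgeSet_parentEdges, hp.card_parentEdges⟩

lemma IsParentMap.parentEdges_eq_edgeFinset (hp : IsParentMap G r p) (hG : G.IsTree) :
    parentEdges r p = G.edgeFinset := by
  refine Finset.eq_of_subset_of_card_le
    (fun e he => SimpleGraph.mem_edgeFinset.2 (hp.coe_parentEdges_subset he)) ?_
  have := hp.card_parentEdges
  have := hG.card_edgeFinset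
  omega

/-- The `f`-weight of the edge from `v` to its parent `p v`, and `0` at the root. -/
def parentCost (f : Sym2 U → ℝ) (r : U) (p : U → U) (v : U) : ℝ :=
  if v = r then 0 else f s(v, p v)

lemma IsParentMap.sum_parentEdges (hp : IsParentMap G r p) (f : Sym2 U → ℝ) :
    ∑ e ∈ parentEdges r p, f e = ∑ v, parentCost f r p v := by
  rw [parentEdges, Finset.sum_image hp.injOn, ← Finset.add_sum_erase _ _ (Finset.mem_univ r),
    parentCost, if_pos rfl, zero_add]
  exact Finset.sum_congr rfl fun v hv => (if_neg (Finset.ne_of_mem_erase hv)).symm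

lemma IsParentMap.sum_parentCost (hp : IsParentMap G r p) (hG : G.IsTree) (f : Sym2 U → ℝ) :
    ∑ v, parentCost f r p v = ∑ e ∈ G.edgeFinset, f e := by
  rw [← hp.sum_parentEdges, hp.parentEdges_eq_edgeFinset hG]

end ParentMaps

section BoxProductEdges

variable {U α β : Type*} [Fintype U] [Fintype α] [Fintype β]

lemma two_mul_sum_edgeFinset (G : SimpleGraph U) (f : Sym2 U → ℝ) :
    2 * ∑ e ∈ G.edgeFinset, f e = ∑ v, ∑ w ∈ G.neighborFinset v, f s(v, w) := by
  have hedge : ∑ d : G.Dart, f d.edge = 2 * ∑ e ∈ G.edgeFinset, f e := by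
    rw [← Finset.sum_fiberwise_of_maps_to (g := SimpleGraph.Dart.edge) (t := G.edgeFinset)
      fun d _ => SimpleGraph.mem_edgeFinset.2 d.edge_mem, Finset.mul_sum]
    refine Finset.sum_congr rfl fun e he => ?_
    rw [Finset.sum_congr rfl fun d hd => congrArg f (Finset.mem_filter.1 hd).2,
      Finset.sum_const, G.dart_edge_fiber_card e (SimpleGraph.mem_edgeFinset.1 he), nsmul_eq_mul,
      Nat.cast_ofNat]
  rw [← hedge, ← Finset.sum_fiberwise (g := fun d : G.Dart => d.fst)]
  refine Finset.sum_congr rfl fun v _ => ?_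
  rw [G.dart_fst_fiber, Finset.sum_image (G.dartOfNeighborSet_injective v).injOn,
    SimpleGraph.neighborFinset, Set.toFinset, Finset.sum_map]
  rfl

/-- The total `x`-weight of the copy of `B` above `a` in a box product `A □ B`. -/
def rowSum (B : SimpleGraph β) (x : Sym2 (α × β) → ℝ) (a : α) : ℝ :=
  ∑ e ∈ B.edgeFinset, x (e.map fun b => (a, b))

/-- The total `x`-weight of the copy of `A` above `b` in a box product `A □ B`. -/
def colSum (A : SimpleGraph α) (x : Sym2 (α × β) → ℝ) (b : β) : ℝ :=
  ∑ e ∈ A.edgeFinset, x (e.map fun a => (a, b))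

lemma sum_edgeFinset_boxProd (A : SimpleGraph α) (B : SimpleGraph β) (x : Sym2 (α × β) → ℝ) :
    ∑ e ∈ (A □ B).edgeFinset, x e = ∑ a, rowSum B x a + ∑ b, colSum A x b := by
  refine mul_left_cancel₀ (two_ne_zero (α := ℝ)) ?_
  simp only [rowSum, colSum, two_mul_sum_edgeFinset, mul_add, Finset.mul_sum (s := Finset.univ),
    SimpleGraph.neighborFinset_boxProd, Finset.sum_disjUnion, Finset.sum_product,
    Finset.sum_singleton, Finset.sum_add_distrib, Sym2.map_mk]
  rw [Fintype.sum_prod_type_right, Fintype.sum_prod_type, add_comm]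

end BoxProductEdges

section MonotoneTrees

variable {α β : Type*} {A : SimpleGraph α} {B : SimpleGraph β} {x : Sym2 (α × β) → ℝ}
  {r : α × β} {K : Set (α × β)} {q : ℝ}

lemma dist_boxProd (hA : A.Connected) (hB : B.Connected) (v w : α × β) :
    (A □ B).dist v w = A.dist v.1 w.1 + B.dist v.2 w.2 := by
  have hedist := SimpleGraph.edist_boxProd (G := A) (H := B) v w
  rw [← ((hA.boxProd hB).preconnected v w).coe_dist_eq_edist,
    ← (hA.preconnected v.1 w.1).coe_dist_eq_edist,
    ← (hB.preconnected v.2 w.2).coe_dist_eq_edist] at hedist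
  exact_mod_cast hedist

/-- The parent function of a monotone tree of `A □ B` rooted at `r`: a vertex steps along its row
(in the `B` direction) if it lies in `K` and along its column otherwise, unless only one of the two
steps approaches `r`. -/
def boxParent (A : SimpleGraph α) (B : SimpleGraph β) (r : α × β) (K : Set (α × β))
    (v : α × β) : α × β :=
  if v.1 = r.1 ∨ (v.2 ≠ r.2 ∧ v ∈ K) then (v.1, stepToward B r.2 v.2)
  else (stepToward A r.1 v.1, v.2)

lemma isParentMap_boxParent (hA : A.Connected) (hB : B.Connected) (r : α × β)
    (K : Set (α × β)) : IsParentMap (A □ B) r (boxParent A B r K) := by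
  have hrow (v : α × β) (hv : v ≠ r) (h : v.1 = r.1 ∨ (v.2 ≠ r.2 ∧ v ∈ K)) : v.2 ≠ r.2 :=
    h.elim (fun h₁ h₂ => hv (Prod.ext h₁ h₂)) And.left
  have hA' := isParentMap_stepToward hA r.1
  have hB' := isParentMap_stepToward hB r.2
  constructor <;> intro v hv <;> rw [boxParent] <;> split_ifs with h
  · exact SimpleGraph.boxProd_adj_right.2 (hB'.adj _ (hrow v hv h))
  · exact SimpleGraph.boxProd_adj_left.2 (hA'.adj _ fun h₁ => h (.inl h₁))
  · simpa [dist_boxProd hA hB] using hB'.dist_lt _ (hrow v hv h)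
  · simpa [dist_boxProd hA hB] using hA'.dist_lt _ fun h₁ => h (.inl h₁)

/-- The `x`-weight of the step of `v` towards `r` along its row, `0` if there is none. -/
def rowCost (B : SimpleGraph β) (x : Sym2 (α × β) → ℝ) (r v : α × β) : ℝ :=
  parentCost (fun e => x (e.map fun b => (v.1, b))) r.2 (stepToward B r.2) v.2

/-- The `x`-weight of the step of `v` towards `r` along its column, `0` if there is none. -/
def colCost (A : SimpleGraph α) (x : Sym2 (α × β) → ℝ) (r v : α × β) : ℝ :=
  parentCost (fun e => x (e.map fun a => (a, v.2))) r.1 (stepToward A r.1) v.1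

lemma rowCost_of_eq {v : α × β} (h : v.2 = r.2) : rowCost B x r v = 0 :=
  if_pos h

lemma colCost_of_eq {v : α × β} (h : v.1 = r.1) : colCost A x r v = 0 :=
  if_pos h

lemma rowCost_of_ne {v : α × β} (h : v.2 ≠ r.2) :
    rowCost B x r v = x s(v, (v.1, stepToward B r.2 v.2)) :=
  if_neg h

lemma colCost_of_ne {v : α × β} (h : v.1 ≠ r.1) :
    colCost A x r v = x s(v, (stepToward A r.1 v.1, v.2)) :=
  if_neg h

lemma parentCost_boxParent (v : α × β) :
    parentCost x r (boxParent A B r K) v =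
      if v.1 = r.1 ∨ (v.2 ≠ r.2 ∧ v ∈ K) then rowCost B x r v else colCost A x r v := by
  rcases eq_or_ne v r with rfl | hv
  · rw [parentCost, if_pos rfl, if_pos (.inl rfl), rowCost_of_eq rfl]
  · rw [parentCost, if_neg hv, boxParent]
    split_ifs with h
    · exact (rowCost_of_ne <| h.elim (fun h₁ h₂ => hv (Prod.ext h₁ h₂)) And.left).symm
    · exact (colCost_of_ne fun h₁ => h (.inl h₁)).symm

/-- The parent function of the monotone tree in which every vertex with a choice takes the step of
larger `x`-weight. -/
def greedyParent (A : SimpleGraph α) (B : SimpleGraph β) (x : Sym2 (α × β) → ℝ) (r : α × β) :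
    α × β → α × β :=
  boxParent A B r {v | colCost A x r v ≤ rowCost B x r v}

lemma parentCost_greedyParent (v : α × β) :
    parentCost x r (greedyParent A B x r) v =
      if v.1 = r.1 then rowCost B x r v else if v.2 = r.2 then colCost A x r v
      else max (rowCost B x r v) (colCost A x r v) := by
  rw [greedyParent, parentCost_boxParent, Set.mem_ofPred_eq]
  split_ifs <;> grind

/-- The expected `x`-weight of the edge from `v` to its parent in the random monotone tree in which
every vertex with a choice steps along its row with probability `q`. -/
def mixedCost (A : SimpleGraph α) (B : SimpleGraph β) (q : ℝ) (x : Sym2 (α × β) → ℝ)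
    (r v : α × β) : ℝ :=
  if v.1 = r.1 then rowCost B x r v else if v.2 = r.2 then colCost A x r v
  else q * rowCost B x r v + (1 - q) * colCost A x r v

lemma mixedCost_le_parentCost_greedyParent (hq₀ : 0 ≤ q) (hq₁ : q ≤ 1) (v : α × β) :
    mixedCost A B q x r v ≤ parentCost x r (greedyParent A B x r) v := by
  rw [parentCost_greedyParent, mixedCost]
  split_ifs
  · exact le_rfl
  · exact le_rfl
  · have hrow := mul_le_mul_of_nonneg_left (le_max_left (rowCost B x r v) (colCost A x r v)) hq₀
    have hcol := mul_le_mul_of_nonneg_left (le_max_right (rowCost B x r v) (colCost A x r v))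
      (sub_nonneg.2 hq₁)
    linarith

lemma rowCost_eq_colCost_of_mixedCost_eq (hq₀ : 0 < q) (hq₁ : q < 1) {v : α × β}
    (h₁ : v.1 ≠ r.1) (h₂ : v.2 ≠ r.2)
    (h : mixedCost A B q x r v = parentCost x r (greedyParent A B x r) v) :
    rowCost B x r v = colCost A x r v := by
  rw [parentCost_greedyParent, mixedCost, if_neg h₁, if_neg h₂, if_neg h₁, if_neg h₂] at h
  rcases max_cases (rowCost B x r v) (colCost A x r v) with ⟨hmax, hle⟩ | ⟨hmax, hlt⟩
  · rw [hmax] at h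
    nlinarith
  · rw [hmax] at h
    nlinarith

lemma mixedCost_eq_add (v : α × β) :
    mixedCost A B q x r v =
      q * rowCost B x r v + (1 - q) * colCost A x r v +
        ((if v.1 = r.1 then (1 - q) * rowCost B x r v else 0) +
          if v.2 = r.2 then q * colCost A x r v else 0) := by
  rw [mixedCost]
  by_cases h₁ : v.1 = r.1 <;> by_cases h₂ : v.2 = r.2
  · simp [h₁, h₂, rowCost_of_eq, colCost_of_eq]
  · simp [h₁, h₂, colCost_of_eq, ← add_mul]
  · simp [h₁, h₂, rowCost_of_eq, ← add_mul]
  · simp [h₁, h₂]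

lemma sum_rowCost [Fintype β] (hB : B.IsTree) (a : α) :
    ∑ b, rowCost B x r (a, b) = rowSum B x a :=
  (isParentMap_stepToward hB.connected r.2).sum_parentCost hB fun e => x (e.map fun b => (a, b))

lemma sum_colCost [Fintype α] (hA : A.IsTree) (b : β) :
    ∑ a, colCost A x r (a, b) = colSum A x b :=
  (isParentMap_stepToward hA.connected r.1).sum_parentCost hA fun e => x (e.map fun a => (a, b))

variable [Fintype α] [Fintype β]

lemma sum_mixedCost (hA : A.IsTree) (hB : B.IsTree) :
    ∑ v, mixedCost A B q x r v =
      q * ∑ a, rowSum B x a + (1 - q) * ∑ b, colSum A x b +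
        ((1 - q) * rowSum B x r.1 + q * colSum A x r.2) := by
  have hrow : ∑ v, rowCost B x r v = ∑ a, rowSum B x a := by
    simp only [Fintype.sum_prod_type, sum_rowCost hB]
  have hcol : ∑ v, colCost A x r v = ∑ b, colSum A x b := by
    simp only [Fintype.sum_prod_type_right, sum_colCost hA]
  have hrow_root : ∑ v : α × β, (if v.1 = r.1 then (1 - q) * rowCost B x r v else 0) =
      (1 - q) * rowSum B x r.1 := by
    simp only [Fintype.sum_prod_type_right, Finset.sum_ite_eq', Finset.mem_univ, if_true,
      ← Finset.mul_sum, sum_rowCost hB]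
  have hcol_root : ∑ v : α × β, (if v.2 = r.2 then q * colCost A x r v else 0) =
      q * colSum A x r.2 := by
    simp only [Fintype.sum_prod_type, Finset.sum_ite_eq', Finset.mem_univ, if_true,
      ← Finset.mul_sum, sum_colCost hA]
  simp only [mixedCost_eq_add, Finset.sum_add_distrib, ← Finset.mul_sum, hrow, hcol, hrow_root,
    hcol_root]

lemma sum_sum_mixedCost (hA : A.IsTree) (hB : B.IsTree) :
    ∑ r, ∑ v, mixedCost A B q x r v =
      Fintype.card β * (1 + (Fintype.card α - 1) * q) * ∑ a, rowSum B x a +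
        Fintype.card α * (1 + (Fintype.card β - 1) * (1 - q)) * ∑ b, colSum A x b := by
  simp only [sum_mixedCost hA hB, Finset.sum_add_distrib, Finset.sum_const, Finset.card_univ,
    Fintype.card_prod, nsmul_eq_mul, Nat.cast_mul, Fintype.sum_prod_type, ← Finset.mul_sum]
  ring

lemma exists_sum_sum_mixedCost_eq [Nontrivial α] [Nontrivial β] (hA : A.IsTree)
    (hB : B.IsTree) :
    ∃ q c : ℝ, 0 < q ∧ q < 1 ∧ ∀ x : Sym2 (α × β) → ℝ, ∑ r, ∑ v, mixedCost A B q x r v =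
      Fintype.card (α × β) * (c * ∑ e ∈ (A □ B).edgeFinset, x e) := by
  set m : ℝ := (Fintype.card α : ℝ) with hm
  set n : ℝ := (Fintype.card β : ℝ) with hn
  have hm₁ : 1 < m := Nat.one_lt_cast.2 (Fintype.one_lt_card (α := α))
  have hn₁ : 1 < n := Nat.one_lt_cast.2 (Fintype.one_lt_card (α := β))
  obtain ⟨D, hD⟩ : ∃ D, D = (m - 1) * n + (n - 1) * m := ⟨_, rfl⟩
  have hrow : 0 < (m - 1) * n := mul_pos (by linarith) (by linarith)
  have hcol : 0 < (n - 1) * m := mul_pos (by linarith) (by linarith)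
  have hD₀ : 0 < D := by linarith
  -- `q` is chosen to equalize the two coefficients in `sum_sum_mixedCost`.
  refine ⟨(m - 1) * n / D, (m * n - 1) / D, by positivity, (div_lt_one hD₀).2 (by linarith),
    fun x => ?_⟩
  have hrow_coeff : n * (1 + (m - 1) * ((m - 1) * n / D)) = m * n * ((m * n - 1) / D) := by
    field_simp
    rw [hD]
    ring
  have hcol_coeff : m * (1 + (n - 1) * (1 - (m - 1) * n / D)) = m * n * ((m * n - 1) / D) := by
    field_simp
    rw [hD]
    ring
  rw [sum_sum_mixedCost hA hB, sum_edgeFinset_boxProd, Fintype.card_prod, Nat.cast_mul, ← hm, ← hn,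
    hrow_coeff, hcol_coeff]
  ring

end MonotoneTrees

section ConstantWeights

variable {U : Type*} {G : SimpleGraph U} {x : Sym2 U → ℝ} {k : ℝ}

lemma exists_forall_mem_edgeSet_eq (hG : G.Preconnected)
    (hx : ∀ u v w, G.Adj u v → G.Adj u w → x s(u, v) = x s(u, w)) :
    ∃ k, ∀ e ∈ G.edgeSet, x e = k := by
  have hreach {u v : U} (huv : G.Reachable u v) :
      ∀ u' v', G.Adj u u' → G.Adj v v' → x s(u, u') = x s(v, v') := by
    obtain ⟨W⟩ := huv
    induction W with
    | nil => exact hx _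
    | @cons u w v h _ ih =>
      intro u' v' hu hv
      rw [hx u u' w hu h, Sym2.eq_swap, ih u v' h.symm hv]
  by_cases hne : ∃ u v, G.Adj u v
  · obtain ⟨u, v, huv⟩ := hne
    refine ⟨x s(u, v), fun e he => ?_⟩
    induction e with
    | _ w w' =>
      exact hreach (hG w u) w' v he huv
  · refine ⟨0, fun e he => ?_⟩
    induction e with
    | _ w w' => exact absurd ⟨w, w', he⟩ hne

lemma sum_eq_of_mem_spanningTrees [Fintype U] [Nonempty U] (hx : ∀ e ∈ G.edgeSet, x e = k)
    {T T' : Finset (Sym2 U)} (hT : T ∈ spanningTrees G) (hT' : T' ∈ spanningTrees G) :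
    ∑ e ∈ T, x e = ∑ e ∈ T', x e := by
  obtain ⟨hsub, -, hcard⟩ := isSpanningTreeOn_univ_iff.1 (mem_spanningTrees.1 hT)
  obtain ⟨hsub', -, hcard'⟩ := isSpanningTreeOn_univ_iff.1 (mem_spanningTrees.1 hT')
  rw [Finset.sum_congr rfl fun e he => hx e (hsub he),
    Finset.sum_congr rfl fun e he => hx e (hsub' he), Finset.sum_const, Finset.sum_const,
    Nat.succ_injective (hcard.trans hcard'.symm)]

end ConstantWeights

section BoxProductOfTrees

variable {α β : Type*} {A : SimpleGraph α} {B : SimpleGraph β} {x : Sym2 (α × β) → ℝ}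

lemma exists_forall_mem_edgeSet_boxProd_eq [Nontrivial α] [Nontrivial β] (hA : A.Preconnected)
    (hB : B.Preconnected) (hx : ∀ a a' b b', A.Adj a a' → B.Adj b b' →
      x s((a, b), (a, b')) = x s((a, b), (a', b))) :
    ∃ k, ∀ e ∈ (A □ B).edgeSet, x e = k := by
  refine exists_forall_mem_edgeSet_eq (hA.boxProd hB) ?_
  rintro ⟨a, b⟩ ⟨a₁, b₁⟩ ⟨a₂, b₂⟩ h₁ h₂
  obtain ⟨a', ha'⟩ := hA.exists_adj_of_nontrivial a
  obtain ⟨b', hb'⟩ := hB.exists_adj_of_nontrivial b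
  rcases SimpleGraph.boxProd_adj.1 h₁ with ⟨h₁, rfl⟩ | ⟨h₁, rfl⟩ <;>
    rcases SimpleGraph.boxProd_adj.1 h₂ with ⟨h₂, rfl⟩ | ⟨h₂, rfl⟩
  · exact (hx _ _ _ _ h₁ hb').symm.trans (hx _ _ _ _ h₂ hb')
  · exact (hx _ _ _ _ h₁ h₂).symm
  · exact hx _ _ _ _ h₂ h₁
  · exact (hx _ _ _ _ ha' h₁).trans (hx _ _ _ _ ha' h₂).symm

lemma corner_eq_of_rowCost_eq_colCost (hA : A.Connected) (hB : B.Connected)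
    (h : ∀ r v : α × β, v.1 ≠ r.1 → v.2 ≠ r.2 → rowCost B x r v = colCost A x r v)
    {a a' : α} {b b' : β} (ha : A.Adj a a') (hb : B.Adj b b') :
    x s((a, b), (a, b')) = x s((a, b), (a', b)) := by
  have hcost := h (a', b') (a, b) ha.ne hb.ne
  rwa [rowCost_of_ne hb.ne, colCost_of_ne ha.ne,
    (isParentMap_stepToward hB b').eq_root_of_adj hb,
    (isParentMap_stepToward hA a').eq_root_of_adj ha] at hcost

lemma isInteriorConstant_boxProd [Fintype α] [Fintype β] [Nontrivial α] [Nontrivial β]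
    (hA : A.IsTree) (hB : B.IsTree) : ∃ c, IsInteriorConstant (A □ B) c := by
  obtain ⟨q, c, hq₀, hq₁, hmean⟩ := exists_sum_sum_mixedCost_eq hA hB
  refine ⟨c, fun x hx => ?_⟩
  have hparent (r : α × β) : IsParentMap (A □ B) r (greedyParent A B x r) :=
    isParentMap_boxParent hA.connected hB.connected r _
  have hmem (r : α × β) := (hparent r).parentEdges_mem_spanningTrees
  have hgreedy (r : α × β) : ∑ v, mixedCost A B q x r v ≤
      ∑ e ∈ parentEdges r (greedyParent A B x r), x e := by
    rw [(hparent r).sum_parentEdges]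
    exact Finset.sum_le_sum fun v _ => mixedCost_le_parentCost_greedyParent hq₀.le hq₁.le v
  have hmax (r : α × β) : ∑ v, mixedCost A B q x r v ≤ c * ∑ e ∈ (A □ B).edgeFinset, x e :=
    (hgreedy r).trans (hx _ (hmem r))
  have htight (r : α × β) :
      ∑ v, mixedCost A B q x r v = c * ∑ e ∈ (A □ B).edgeFinset, x e := by
    refine (Finset.sum_eq_sum_iff_of_le fun r _ => hmax r).1 ?_ r (Finset.mem_univ r)
    rw [hmean, Finset.sum_const, Finset.card_univ, nsmul_eq_mul]
  have htree (r : α × β) : ∑ e ∈ parentEdges r (greedyParent A B x r), x e =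
      c * ∑ e ∈ (A □ B).edgeFinset, x e :=
    (hx _ (hmem r)).antisymm ((htight r).symm.trans_le (hgreedy r))
  have hcost (r v : α × β) (h₁ : v.1 ≠ r.1) (h₂ : v.2 ≠ r.2) :
      rowCost B x r v = colCost A x r v := by
    refine rowCost_eq_colCost_of_mixedCost_eq hq₀ hq₁ h₁ h₂ ?_
    refine (Finset.sum_eq_sum_iff_of_le fun v _ =>
      mixedCost_le_parentCost_greedyParent hq₀.le hq₁.le v).1 ?_ v (Finset.mem_univ v)
    rw [htight, ← (hparent r).sum_parentEdges, htree]
  obtain ⟨k, hk⟩ := exists_forall_mem_edgeSet_boxProd_eq hA.connected.preconnected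
    hB.connected.preconnected
    fun _ _ _ _ ha hb => corner_eq_of_rowCost_eq_colCost hA.connected hB.connected hcost ha hb
  intro T hT
  obtain ⟨r⟩ := (inferInstance : Nonempty (α × β))
  rw [sum_eq_of_mem_spanningTrees hk hT (hmem r), htree]

theorem gridGraph_uniformizable_general [Fintype α] [Fintype β] [DecidableEq α] [DecidableEq β]
    [Nontrivial α] [Nontrivial β] (hA : A.IsTree) (hB : B.IsTree) :
    IsUniformizable (A □ B) := by
  obtain ⟨c, hc⟩ := isInteriorConstant_boxProd hA hB
  obtain ⟨r⟩ := (inferInstance : Nonempty (α × β))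
  exact hc.isUniformizable
    ⟨_, (isParentMap_boxParent hA.connected hB.connected r ∅).parentEdges_mem_spanningTrees⟩

end BoxProductOfTrees

section Grid

lemma gridGraph_eq_boxProd (m n : ℕ) :
    gridGraph m n = SimpleGraph.pathGraph m □ SimpleGraph.pathGraph n := by
  ext v w
  simp only [gridGraph, SimpleGraph.fromRel_adj, SimpleGraph.boxProd_adj,
    SimpleGraph.pathGraph_adj, Fin.ext_iff, Prod.ext_iff, ne_eq]
  omega

lemma pathGraph_isTree {n : ℕ} (hn : n ≠ 0) : (SimpleGraph.pathGraph n).IsTree := by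
  obtain ⟨k, rfl⟩ := Nat.exists_eq_add_one_of_ne_zero hn
  have hsub : (SimpleGraph.pathGraph (k + 1)).edgeFinset ⊆
      Finset.univ.image fun i : Fin k => s(i.castSucc, i.succ) := by
    intro e he
    induction e with
    | _ u v =>
      have : u.val + 1 = v.val ∨ v.val + 1 = u.val := by
        simpa [SimpleGraph.pathGraph_adj] using he
      simp only [Finset.mem_image, Finset.mem_univ, true_and, Sym2.eq_iff, Fin.ext_iff,
        Fin.val_castSucc, Fin.val_succ]
      rcases this with h | h
      · exact ⟨⟨u, by omega⟩, .inl ⟨rfl, h⟩⟩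
      · exact ⟨⟨v, by omega⟩, .inr ⟨rfl, h⟩⟩
  have hle : Nat.card (SimpleGraph.pathGraph (k + 1)).edgeSet ≤ k := by
    rw [Nat.card_eq_fintype_card, ← SimpleGraph.edgeFinset_card]
    simpa using (Finset.card_le_card hsub).trans Finset.card_image_le
  have hconn := SimpleGraph.pathGraph_connected k
  have hge := hconn.card_vert_le_card_edgeSet_add_one
  refine SimpleGraph.isTree_iff_connected_and_card.2 ⟨hconn, ?_⟩
  rw [Nat.card_fin] at hge ⊢
  omega

end Grid

/-- for `m, n ≥ 2` the grid graph `G_{m,n}` is uniformizable: there are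
positive edge weights `σ` such that the weighted uniform spanning tree pmf
`μ_σ(γ) = (∏_{e∈γ} σ(e)) / (∑_{γ'} ∏_{e∈γ'} σ(e))` is fair. -/
theorem gridGraph_uniformizable (m n : ℕ) (hm : 2 ≤ m) (hn : 2 ≤ n) :
    ∃ σ : Sym2 (Fin m × Fin n) → ℝ,
      (∀ e ∈ (gridGraph m n).edgeFinset, 0 < σ e) ∧
      ∃ μ : TreePMFOn (gridGraph m n) Finset.univ,
        (∀ T : Finset (Sym2 (Fin m × Fin n)),
            μ.toFun T =
              (if IsSpanningTreeOn (gridGraph m n) Finset.univ T then ∏ e ∈ T, σ e else 0) /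
                ∑ T' ∈ Finset.univ.filter
                    (fun T' : Finset (Sym2 (Fin m × Fin n)) =>
                      IsSpanningTreeOn (gridGraph m n) Finset.univ T'),
                  ∏ e ∈ T', σ e) ∧
        IsFairOn μ := by
  have : Nontrivial (Fin m) := Fin.nontrivial_iff_two_le.2 hm
  have : Nontrivial (Fin n) := Fin.nontrivial_iff_two_le.2 hn
  change IsUniformizable (gridGraph m n)
  rw [gridGraph_eq_boxProd]
  exact gridGraph_uniformizable_general (pathGraph_isTree (by omega)) (pathGraph_isTree (by omega))
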